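/- The set X = {(x,y,z) ∈ (S¹)³ : x, y, z pairwise distinct} of pairwise distinct triples of points of the circle has exactly two connected components: the set P of positively oriented triples and the set N of negatively oriented triples. In particular, P and N are nonempty, open, connected, disjoint, and their union is X. -/

import Mathlib

/-- A triple `(x, y, z)` of points of the circle `ℝ/ℤ` is positively oriented if it admits
lifts `a < b < c < a + 1` in `ℝ`. -/
def PosOriented (x y z : UnitAddCircle) : Prop :=
  ∃ a b c : ℝ, (a : UnitAddCircle) = x ∧ (b : UnitAddCircle) = y ∧
    (c : UnitAddCircle) = z ∧ a < b ∧ b < c ∧ c < a + 1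

/-- The set of pairwise distinct triples of points of the circle. -/
def distinctTriples : Set (UnitAddCircle × UnitAddCircle × UnitAddCircle) :=
  {p | p.1 ≠ p.2.1 ∧ p.1 ≠ p.2.2 ∧ p.2.1 ≠ p.2.2}

/-- The set of positively oriented pairwise distinct triples. -/
def posTriples : Set (UnitAddCircle × UnitAddCircle × UnitAddCircle) :=
  {p ∈ distinctTriples | PosOriented p.1 p.2.1 p.2.2}

/-- The set of negatively oriented pairwise distinct triples. -/
def negTriples : Set (UnitAddCircle × UnitAddCircle × UnitAddCircle) :=
  {p ∈ distinctTriples | ¬ PosOriented p.1 p.2.1 p.2.2}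

theorem aux_coe_eq (a b : ℝ) : (a : UnitAddCircle) = b ↔ ∃ n : ℤ, b = a + n := by
  rw [eq_comm, ← sub_eq_zero, ← AddCircle.coe_sub, AddCircle.coe_eq_zero_iff]
  constructor
  · rintro ⟨n, hn⟩
    refine ⟨n, ?_⟩
    simp at hn
    linarith
  · rintro ⟨n, hn⟩
    refine ⟨n, ?_⟩
    simp [hn]

theorem aux_ne (a b : ℝ) (h : a < b) (h' : b < a + 1) : (a : UnitAddCircle) ≠ b := by
  intro e
  obtain ⟨n, hn⟩ := (aux_coe_eq a b).1 e
  have h1 : (0 : ℝ) < n := by linarith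
  have h2 : (n : ℝ) < 1 := by linarith
  norm_cast at h1 h2
  omega

theorem aux_lift (a : ℝ) (y : UnitAddCircle) (h : (a : UnitAddCircle) ≠ y) :
    ∃ b : ℝ, (b : UnitAddCircle) = y ∧ a < b ∧ b < a + 1 := by
  obtain ⟨b, rfl⟩ := QuotientAddGroup.mk_surjective y
  refine ⟨b - ⌊b - a⌋, ?_, ?_, ?_⟩
  · exact (aux_coe_eq _ _).2 ⟨⌊b - a⌋, by ring⟩
  · have h1 := Int.floor_le (b - a)
    rcases h1.lt_or_eq with h1 | h1
    · linarith
    · exact absurd ((aux_coe_eq a b).2 ⟨⌊b - a⌋, by linarith⟩) h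
  · have := Int.lt_floor_add_one (b - a)
    linarith

theorem aux_distinct {x y z : UnitAddCircle} (h : PosOriented x y z) :
    x ≠ y ∧ x ≠ z ∧ y ≠ z := by
  obtain ⟨a, b, c, rfl, rfl, rfl, h1, h2, h3⟩ := h
  exact ⟨aux_ne _ _ h1 (by linarith), aux_ne _ _ (by linarith) h3,
    aux_ne _ _ h2 (by linarith)⟩

theorem aux_or {x y z : UnitAddCircle} (h : x ≠ y ∧ x ≠ z ∧ y ≠ z) :
    PosOriented x y z ∨ PosOriented x z y := by
  obtain ⟨h1, h2, h3⟩ := h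
  obtain ⟨a, rfl⟩ := QuotientAddGroup.mk_surjective x
  obtain ⟨b, rfl, hb, hb'⟩ := aux_lift a y h1
  obtain ⟨c, rfl, hc, hc'⟩ := aux_lift a z h2
  rcases lt_trichotomy b c with h | h | h
  · exact Or.inl ⟨a, b, c, rfl, rfl, rfl, hb, h, hc'⟩
  · exact absurd (by rw [h]) h3
  · exact Or.inr ⟨a, c, b, rfl, rfl, rfl, hc, h, hb'⟩

theorem aux_not {x y z : UnitAddCircle} (h : PosOriented x y z) (h' : PosOriented x z y) :
    False := by
  obtain ⟨a, b, c, rfl, rfl, rfl, h1, h2, h3⟩ := h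
  obtain ⟨a', c', b', ea, ec, eb, h1', h2', h3'⟩ := h'
  obtain ⟨k, hk⟩ := (aux_coe_eq _ _).1 ea
  obtain ⟨m, hm⟩ := (aux_coe_eq _ _).1 eb
  obtain ⟨n, hn⟩ := (aux_coe_eq _ _).1 ec
  have e1 : (k : ℝ) < m + 1 := by linarith
  have e2 : (m : ℝ) < k + 1 := by linarith
  have e3 : (k : ℝ) < n + 1 := by linarith
  have e4 : (n : ℝ) < k + 1 := by linarith
  norm_cast at e1 e2 e3 e4
  have e5 : m = k := by omega
  have e6 : n = k := by omega
  subst e5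
  subst e6
  linarith

/-- The lifts of positively oriented triples. -/
def auxQ : Set (ℝ × ℝ × ℝ) := {p | p.1 < p.2.1 ∧ p.2.1 < p.2.2 ∧ p.2.2 < p.1 + 1}

/-- The projection. -/
def auxF : ℝ × ℝ × ℝ → UnitAddCircle × UnitAddCircle × UnitAddCircle :=
  Prod.map (fun a : ℝ => (a : UnitAddCircle))
    (Prod.map (fun a : ℝ => (a : UnitAddCircle)) (fun a : ℝ => (a : UnitAddCircle)))

theorem auxF_cont : Continuous auxF :=
  (AddCircle.continuous_mk' 1).prodMap
    ((AddCircle.continuous_mk' 1).prodMap (AddCircle.continuous_mk' 1))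

theorem auxF_open : IsOpenMap auxF :=
  QuotientAddGroup.isOpenMap_coe.prodMap
    (QuotientAddGroup.isOpenMap_coe.prodMap QuotientAddGroup.isOpenMap_coe)

theorem auxQ_open : IsOpen auxQ := by
  have h1 : IsOpen {p : ℝ × ℝ × ℝ | p.1 < p.2.1} := isOpen_lt (by fun_prop) (by fun_prop)
  have h2 : IsOpen {p : ℝ × ℝ × ℝ | p.2.1 < p.2.2} := isOpen_lt (by fun_prop) (by fun_prop)
  have h3 : IsOpen {p : ℝ × ℝ × ℝ | p.2.2 < p.1 + 1} := isOpen_lt (by fun_prop) (by fun_prop)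
  exact h1.inter (h2.inter h3)

theorem auxQ_conn : IsConnected auxQ := by
  refine ⟨⟨(0, 1/4, 1/2), by norm_num [auxQ]⟩, Convex.isPreconnected ?_⟩
  rintro ⟨a, b, c⟩ ⟨h1, h2, h3⟩ ⟨a', b', c'⟩ ⟨h1', h2', h3'⟩ s t hs ht hst
  simp only at h1 h2 h3 h1' h2' h3'
  have key : ∀ u v : ℝ, 0 < u → 0 < v → 0 < s * u + t * v := by
    intro u v hu hv
    rcases hs.lt_or_eq with hs | hs
    · have := mul_pos hs hu
      have := mul_nonneg ht hv.le
      linarith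
    · have : t = 1 := by linarith
      subst this
      rw [← hs]
      linarith
  have k1 := key _ _ (sub_pos.2 h1) (sub_pos.2 h1')
  have k2 := key _ _ (sub_pos.2 h2) (sub_pos.2 h2')
  have k3 := key _ _ (sub_pos.2 h3) (sub_pos.2 h3')
  simp only [auxQ, Set.mem_ofPred_eq, Prod.smul_mk, Prod.mk_add_mk, smul_eq_mul]
  refine ⟨by linarith, by linarith, by linarith⟩

theorem aux_pos : posTriples = auxF '' auxQ := by
  ext ⟨x, y, z⟩
  constructor
  · rintro ⟨-, a, b, c, e1, e2, e3, h1, h2, h3⟩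
    exact ⟨(a, b, c), ⟨h1, h2, h3⟩, Prod.ext e1 (Prod.ext e2 e3)⟩
  · rintro ⟨⟨a, b, c⟩, ⟨h1, h2, h3⟩, e⟩
    have hp : PosOriented x y z :=
      ⟨a, b, c, congrArg (fun p => p.1) e, congrArg (fun p => p.2.1) e,
        congrArg (fun p => p.2.2) e, h1, h2, h3⟩
    exact ⟨aux_distinct hp, hp⟩

/-- Swapping the last two coordinates. -/
def auxS : (UnitAddCircle × UnitAddCircle × UnitAddCircle) ≃ₜ
    (UnitAddCircle × UnitAddCircle × UnitAddCircle) :=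
  (Homeomorph.refl _).prodCongr (Homeomorph.prodComm _ _)

theorem aux_neg : negTriples = auxS '' posTriples := by
  ext ⟨x, y, z⟩
  constructor
  · rintro ⟨hd, hn⟩
    have hp : PosOriented x z y := (aux_or hd).resolve_left hn
    exact ⟨(x, z, y), ⟨aux_distinct hp, hp⟩, rfl⟩
  · rintro ⟨⟨x', z', y'⟩, ⟨⟨d1, d2, d3⟩, hp⟩, e⟩
    obtain rfl : x' = x := congrArg (fun p => p.1) e
    obtain rfl : y' = y := congrArg (fun p => p.2.1) e
    obtain rfl : z' = z := congrArg (fun p => p.2.2) e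
    exact ⟨⟨d2, d1, d3.symm⟩, fun h => aux_not h hp⟩

/-- The space of pairwise distinct triples of points of the circle has exactly two
connected components: the positively oriented triples and the negatively oriented
triples. Both are nonempty, open, connected, they are disjoint, and their union is the
whole set of pairwise distinct triples. -/
theorem distinctTriples_two_components :
    posTriples.Nonempty ∧ negTriples.Nonempty ∧
    IsOpen posTriples ∧ IsOpen negTriples ∧
    IsConnected posTriples ∧ IsConnected negTriples ∧
    Disjoint posTriples negTriples ∧
    posTriples ∪ negTriples = distinctTriples := by
  have hc : IsConnected posTriples := by
    rw [aux_pos]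
    exact auxQ_conn.image _ auxF_cont.continuousOn
  have ho : IsOpen posTriples := by
    rw [aux_pos]
    exact auxF_open _ auxQ_open
  have hc' : IsConnected negTriples := by
    rw [aux_neg]
    exact hc.image _ auxS.continuous.continuousOn
  have ho' : IsOpen negTriples := by
    rw [aux_neg]
    exact auxS.isOpenMap _ ho
  refine ⟨hc.nonempty, hc'.nonempty, ho, ho', hc, hc', ?_, ?_⟩
  · rw [Set.disjoint_left]
    exact fun p h h' => h'.2 h.2
  · ext p
    constructor
    · rintro (h | h)
      · exact h.1
      · exact h.1
    · intro h
      by_cases hp : PosOriented p.1 p.2.1 p.2.2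
      · exact Or.inl ⟨h, hp⟩
      · exact Or.inr ⟨h, hp⟩
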